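/- Let l ∈ {3,4}. Let V be a finite-dimensional real inner product space and Δ⁺ a finite set of nonzero vectors of V such that whenever α, α' ∈ Δ⁺ and α' = c·α for some real number c, then c ∈ {1, 2, 1/2}. Fix w ∈ V, and for each α ∈ Δ⁺ let Θ̂_α be a nonempty finite multiset of real numbers with θ − ⟨α,w⟩ ∈ (π/l)ℤ for every θ ∈ Θ̂_α, such that the cardinality (with multiplicity) of Θ̂_α is strictly greater than that of Θ̂_{2α} whenever both α and 2α lie in Δ⁺. Let Θ_α be the submultiset of Θ̂_α consisting of the elements that are not integer multiples of π/2. Assume that the multiset of vectors {cot(θ)·α : α ∈ Δ⁺, θ ∈ Θ_α} (with multiplicities) is negation-invariant. Then for every nonzero v ∈ V, the total number (with multiplicity) of pairs (α,θ) with α ∈ Δ⁺, θ ∈ Θ_α for which there exists an integer m with (θ+mπ)⁻¹·α = v equals the total number of such pairs for which there exists an integer m with (θ+mπ)⁻¹·α = −v. -/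

import Mathlib

open Real
open scoped Classical RealInnerProductSpace

/-- The submultiset of a multiset of reals consisting of those elements that are not
integer multiples of `π/2`. -/
noncomputable def notHalfPiMultiples (Θ : Multiset ℝ) : Multiset ℝ :=
  Θ.filter (fun θ => ¬ ∃ k : ℤ, θ = k * (π / 2))

/-!
Restricted to a line `ℝα`, the hypothesis says that `cot Θ_α` alone, or `cot Θ_β + 2 cot Θ_{2β}`
when the members of `Δ` on the line are `β` and `2β`, is invariant under negation. In the
second case put `s = ⟨β, w⟩`, so that `Θ̂_β ⊆ s + ℚπ` and `Θ̂_{2β} ⊆ 2s + ℚπ`.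

* If `s ∈ ℚπ`, then all these angles are rational multiples of `π`, and `cot x = 2 cot y` is
  impossible for such `x`, `y` unless `cot y = 0`: it amounts to `sin (x + y) = 3 sin (y - x)`,
  which makes `2 sin (y - x)` an algebraic integer all of whose conjugates have absolute value
  at most `2 / 3`, hence zero. So `β` and `2β` do not interact, and each of them is invariant
  on its own.
* If `s ∉ ℚπ`, then no `cot θ` with `θ ∈ Θ̂_β` vanishes or is the negative of another one, so each
  is cancelled by a value coming from `2β`, against `|Θ̂_β| > |Θ̂_{2β}|`.

Once every `cot Θ_α` is invariant, the conclusion holds one `α` at a time, because the numbers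
`θ + mπ` are the solutions `y` of `cot y = cot θ` and `cot` is odd.
-/

/-- A multiset is negation-invariant if it equals its image under `v ↦ -v`. -/
def NegInvariant {E : Type*} [Neg E] (S : Multiset E) : Prop :=
  S.map (fun v => -v) = S

section NegInvariant

variable {E F : Type*}

theorem multiset_filter_finset_sum {ι : Type*} (p : E → Prop) [DecidablePred p] (s : Finset ι)
    (f : ι → Multiset E) : (∑ i ∈ s, f i).filter p = ∑ i ∈ s, (f i).filter p :=
  map_sum (⟨⟨Multiset.filter p, Multiset.filter_zero p⟩, Multiset.filter_add p⟩ :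
    Multiset E →+ Multiset E) f s

theorem negInvariant_map_iff [Neg E] [Neg F] {f : E → F} (hf : Function.Injective f)
    (hodd : ∀ x, f (-x) = -f x) {S : Multiset E} :
    NegInvariant (S.map f) ↔ NegInvariant S := by
  simp only [NegInvariant, Multiset.map_map, Function.comp_def, ← hodd]
  rw [← (Multiset.map_injective hf).eq_iff, Multiset.map_map, Function.comp_def]

namespace NegInvariant

theorem count_neg [InvolutiveNeg E] [DecidableEq E] {S : Multiset E} (h : NegInvariant S) (x : E) :
    S.count (-x) = S.count x := by
  conv_lhs => rw [← h]
  exact Multiset.count_map_eq_count' _ S neg_injective x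

theorem filter [Neg E] {S : Multiset E} (h : NegInvariant S) (p : E → Prop) [DecidablePred p]
    (hp : ∀ x, p (-x) ↔ p x) : NegInvariant (S.filter p) := by
  have hfilter : (S.map fun v => -v).filter p = S.filter p := congr_arg (Multiset.filter p) h
  simpa only [NegInvariant, Multiset.filter_map, Function.comp_def, hp] using hfilter

theorem of_add_left [Neg E] {S T : Multiset E} (hS : NegInvariant S) (h : NegInvariant (S + T)) :
    NegInvariant T := by
  rw [NegInvariant, Multiset.map_add, hS] at h
  exact add_left_cancel h

theorem of_add_of_notMem [InvolutiveNeg E] {S T : Multiset E} (h : NegInvariant (S + T))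
    (hST : ∀ x ∈ S, x ∉ T ∧ -x ∉ T) : NegInvariant S := by
  have hT : ∀ x ∈ T, ¬ (x ∈ S ∨ -x ∈ S) := by
    rintro x hx (hxS | hxS)
    · exact (hST x hxS).1 hx
    · exact (hST (-x) hxS).2 ((neg_neg x).symm ▸ hx)
  have hfilter := h.filter (fun x => x ∈ S ∨ -x ∈ S) fun x => by rw [neg_neg, or_comm]
  rwa [Multiset.filter_add, Multiset.filter_eq_self.2 fun x hx => Or.inl hx,
    Multiset.filter_eq_nil.2 hT, add_zero] at hfilter

theorem card_le_of_add [Neg E] {S T : Multiset E} (h : NegInvariant (S + T))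
    (hS : ∀ x ∈ S, -x ∉ S) : Multiset.card S ≤ Multiset.card T := by
  have hle : S.map (fun x => -x) ≤ S + T := by
    conv_rhs => rw [← h]
    exact Multiset.map_le_map (Multiset.le_add_right S T)
  have hnotMem : ∀ y ∈ S.map (fun x => -x), y ∉ S := Multiset.forall_mem_map_iff.2 hS
  have hleT : S.map (fun x => -x) ≤ T := by
    calc S.map (fun x => -x) = (S.map (fun x => -x)).filter (fun y => y ∉ S) :=
          (Multiset.filter_eq_self.2 hnotMem).symm
      _ ≤ (S + T).filter (fun y => y ∉ S) := Multiset.filter_le_filter _ hle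
      _ = T.filter (fun y => y ∉ S) := by
          rw [Multiset.filter_add, Multiset.filter_eq_nil.2 fun x hx => not_not.2 hx, zero_add]
      _ ≤ T := Multiset.filter_le _ T
  simpa only [Multiset.card_map] using Multiset.card_le_card hleT

theorem sum_filter_mem_submodule {K V : Type*} [DivisionRing K] [AddCommGroup V] [Module K V]
    {Δ : Finset V} {M : V → Multiset K} (hM : ∀ β ∈ Δ, 0 ∉ M β)
    (h : NegInvariant (∑ β ∈ Δ, (M β).map (· • β))) (W : Submodule K V) :
    NegInvariant (∑ β ∈ Δ with β ∈ W, (M β).map (· • β)) := by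
  have hfilter : ∀ β ∈ Δ, ((M β).map (· • β)).filter (· ∈ W) =
      if β ∈ W then (M β).map (· • β) else 0 := by
    intro β hβ
    have hmem : ∀ c ∈ M β, c • β ∈ W ↔ β ∈ W := fun c hc =>
      W.smul_mem_iff (ne_of_mem_of_not_mem hc (hM β hβ))
    split_ifs with hW
    · exact Multiset.filter_eq_self.2
        (Multiset.forall_mem_map_iff.2 fun c hc => (hmem c hc).2 hW)
    · exact Multiset.filter_eq_nil.2
        (Multiset.forall_mem_map_iff.2 fun c hc => mt (hmem c hc).1 hW)
  rw [Finset.sum_filter, ← Finset.sum_congr rfl hfilter, ← multiset_filter_finset_sum]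
  exact h.filter _ fun x => W.neg_mem_iff

end NegInvariant

end NegInvariant

section RationalAngles

theorem house_sub_inv_le_two {K : Type*} [Field K] [NumberField K] {x : K} (hx : IsOfFinOrder x) :
    NumberField.house (x - x⁻¹) ≤ 2 := by
  refine (pi_norm_le_iff_of_nonneg zero_le_two).2 fun φ => ?_
  have hφ : ‖φ x‖ = 1 := (φ.toMonoidHom.isOfFinOrder hx).norm_eq_one
  calc ‖φ (x - x⁻¹)‖ = ‖φ x - (φ x)⁻¹‖ := by rw [map_sub, map_inv₀]
    _ ≤ ‖φ x‖ + ‖(φ x)⁻¹‖ := norm_sub_le _ _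
    _ = 2 := by rw [norm_inv, hφ]; norm_num

theorem isIntegral_of_isOfFinOrder {R A : Type*} [CommRing R] [Ring A] [Algebra R A] {x : A}
    (hx : IsOfFinOrder x) : IsIntegral R x := by
  obtain ⟨k, hk, hxk⟩ := hx.exists_pow_eq_one
  exact .of_pow hk (hxk ▸ isIntegral_one)

theorem sub_inv_eq_zero_of_eq_natCast_mul {K : Type*} [Field K] [NumberField K] {x y : K} {n : ℕ}
    (hx : IsOfFinOrder x) (hy : IsOfFinOrder y) (hn : 2 < n) (h : y - y⁻¹ = n * (x - x⁻¹)) :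
    x - x⁻¹ = 0 := by
  by_contra hne
  have hxinv : IsOfFinOrder x⁻¹ := by simpa [isOfFinOrder_iff_pow_eq_one] using hx
  have hint : IsIntegral ℤ (x - x⁻¹) :=
    (isIntegral_of_isOfFinOrder hx).sub (isIntegral_of_isOfFinOrder hxinv)
  have hone : 1 ≤ NumberField.house (x - x⁻¹) := NumberField.one_le_house_of_isIntegral hint hne
  have htwo : n * NumberField.house (x - x⁻¹) ≤ 2 := by
    rw [← NumberField.house_nat_mul, ← h]
    exact house_sub_inv_le_two hy
  have hn' : (2 : ℝ) < n := mod_cast hn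
  nlinarith

theorem isOfFinOrder_exp_mul_I {a : ℝ} (ha : a ∈ ℚ ∙ π) :
    IsOfFinOrder (Complex.exp (a * Complex.I)) := by
  obtain ⟨q, rfl⟩ := Submodule.mem_span_singleton.1 ha
  refine isOfFinOrder_iff_pow_eq_one.2 ⟨2 * q.den, Nat.mul_pos two_pos q.den_pos, ?_⟩
  simpa [Rat.smul_def] using Complex.exp_rat_mul_pi_mul_I_pow_two_mul_den q

theorem exp_mul_I_sub_inv (a : ℝ) :
    Complex.exp (a * Complex.I) - (Complex.exp (a * Complex.I))⁻¹ = 2 * Complex.I * sin a := by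
  rw [← Complex.exp_neg, ← neg_mul, Complex.exp_mul_I, Complex.exp_mul_I, Complex.cos_neg,
    Complex.sin_neg, Complex.ofReal_sin]
  ring

theorem sin_eq_zero_of_sin_eq_natCast_mul_sin {a b : ℝ} {n : ℕ} (ha : a ∈ ℚ ∙ π) (hb : b ∈ ℚ ∙ π)
    (hn : 2 < n) (h : sin b = n * sin a) : sin a = 0 := by
  set x := Complex.exp (a * Complex.I) with hx
  set y := Complex.exp (b * Complex.I) with hy
  have hxfin : IsOfFinOrder x := isOfFinOrder_exp_mul_I ha
  have hyfin : IsOfFinOrder y := isOfFinOrder_exp_mul_I hb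
  have hxy : y - y⁻¹ = n * (x - x⁻¹) := by
    rw [hx, hy, exp_mul_I_sub_inv, exp_mul_I_sub_inv, h]
    push_cast
    ring
  let K := IntermediateField.adjoin ℚ {x, y}
  have : FiniteDimensional ℚ K := IntermediateField.finiteDimensional_adjoin_pair
    (isIntegral_of_isOfFinOrder hxfin) (isIntegral_of_isOfFinOrder hyfin)
  have : NumberField K := ⟨⟩
  let x' : K := ⟨x, IntermediateField.subset_adjoin _ _ (by simp)⟩
  let y' : K := ⟨y, IntermediateField.subset_adjoin _ _ (by simp)⟩
  have hfin_iff : ∀ z : K, IsOfFinOrder (z : ℂ) ↔ IsOfFinOrder z := fun z =>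
    Function.Injective.isOfFinOrder_iff (f := (K.val : K →* ℂ)) Subtype.val_injective
  have hx' : x' - x'⁻¹ = 0 := sub_inv_eq_zero_of_eq_natCast_mul ((hfin_iff x').1 hxfin)
    ((hfin_iff y').1 hyfin) hn (Subtype.ext hxy)
  have hzero : 2 * Complex.I * (sin a : ℂ) = 0 :=
    (exp_mul_I_sub_inv a).symm.trans (congr_arg Subtype.val hx')
  have hsin : (sin a : ℂ) = 0 :=
    (mul_eq_zero.1 hzero).resolve_left (mul_ne_zero two_ne_zero Complex.I_ne_zero)
  exact mod_cast hsin

end RationalAngles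

section Cotangent

theorem cot_neg (x : ℝ) : cot (-x) = -cot x := by
  rw [cot_eq_cos_div_sin, cot_eq_cos_div_sin, cos_neg, sin_neg, div_neg]

-- The multiples of `π` are included because `cot` takes the junk value `0` there.
theorem cot_eq_zero_iff {x : ℝ} : cot x = 0 ↔ ∃ k : ℤ, x = k * (π / 2) := by
  calc cot x = 0 ↔ sin (2 * x) = 0 := by
        rw [cot_eq_cos_div_sin, div_eq_zero_iff, sin_two_mul]
        simp [or_comm]
    _ ↔ ∃ k : ℤ, x = k * (π / 2) := by
        rw [sin_eq_zero_iff]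
        exact exists_congr fun k => ⟨fun h => by linarith, fun h => by linarith⟩

theorem sin_ne_zero_of_cot_ne_zero {x : ℝ} (hx : cot x ≠ 0) : sin x ≠ 0 := fun h =>
  hx (by rw [cot_eq_cos_div_sin, h, div_zero])

theorem cot_eq_cot_iff {x y : ℝ} (hx : cot x ≠ 0) : cot x = cot y ↔ ∃ m : ℤ, x + m * π = y := by
  have hsx := sin_ne_zero_of_cot_ne_zero hx
  constructor
  · intro h
    have hsy := sin_ne_zero_of_cot_ne_zero (h ▸ hx)
    rw [cot_eq_cos_div_sin, cot_eq_cos_div_sin, div_eq_div_iff hsx hsy] at h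
    have hsub : sin (y - x) = 0 := by
      rw [sin_sub]
      linarith
    obtain ⟨m, hm⟩ := sin_eq_zero_iff.1 hsub
    exact ⟨m, by linarith⟩
  · rintro ⟨m, rfl⟩
    rw [cot_eq_cos_div_sin, cot_eq_cos_div_sin, cos_add_int_mul_pi, sin_add_int_mul_pi]
    exact (mul_div_mul_left _ _ (zpow_ne_zero m (by norm_num))).symm

theorem intCast_mul_pi_mem_span (m : ℤ) : (m * π : ℝ) ∈ ℚ ∙ π :=
  Submodule.mem_span_singleton.2 ⟨m, by simp [Rat.smul_def]⟩

theorem mem_span_pi_of_cot_eq_zero {x : ℝ} (hx : cot x = 0) : x ∈ ℚ ∙ π := by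
  obtain ⟨k, rfl⟩ := cot_eq_zero_iff.1 hx
  exact Submodule.mem_span_singleton.2 ⟨k / 2, by simp [Rat.smul_def]; ring⟩

theorem cot_ne_two_mul_cot {x y : ℝ} (hx : x ∈ ℚ ∙ π) (hy : y ∈ ℚ ∙ π) (hy0 : cot y ≠ 0) :
    cot x ≠ 2 * cot y := by
  intro h
  have hsx : sin x ≠ 0 := sin_ne_zero_of_cot_ne_zero (h ▸ mul_ne_zero two_ne_zero hy0)
  have hsy : sin y ≠ 0 := sin_ne_zero_of_cot_ne_zero hy0
  have hprod : cos x * sin y = 2 * (sin x * cos y) := by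
    rw [cot_eq_cos_div_sin, cot_eq_cos_div_sin] at h
    field_simp at h
    linarith
  have hsub : sin (y - x) = sin x * cos y := by
    rw [sin_sub]
    linarith
  have hadd : sin (x + y) = (3 : ℕ) * sin (y - x) := by
    rw [hsub, sin_add, hprod]
    push_cast
    ring
  have hzero : sin x * cos y = 0 := hsub ▸ sin_eq_zero_of_sin_eq_natCast_mul_sin
    (sub_mem hy hx) (add_mem hx hy) (by norm_num) hadd
  have hcy : cos y = 0 := (mul_eq_zero.1 hzero).resolve_left hsx
  exact hy0 (by rw [cot_eq_cos_div_sin, hcy, zero_div])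

end Cotangent

section CotValues

/-- The multiset of cotangents of those elements of `Θ` that are not multiples of `π / 2`. For
`Θ = Θ̂_α` its elements are the coefficients of `α` in the multiset of vectors whose
negation-invariance expresses austerity of the orbit. -/
noncomputable def cotValues (Θ : Multiset ℝ) : Multiset ℝ :=
  (notHalfPiMultiples Θ).map cot

theorem mem_notHalfPiMultiples {Θ : Multiset ℝ} {θ : ℝ} :
    θ ∈ notHalfPiMultiples Θ ↔ θ ∈ Θ ∧ cot θ ≠ 0 := by
  rw [notHalfPiMultiples, Multiset.mem_filter, ← cot_eq_zero_iff]

theorem mem_cotValues {Θ : Multiset ℝ} {c : ℝ} :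
    c ∈ cotValues Θ ↔ ∃ θ ∈ Θ, cot θ ≠ 0 ∧ cot θ = c := by
  simp only [cotValues, Multiset.mem_map, mem_notHalfPiMultiples, and_assoc]

theorem zero_notMem_cotValues (Θ : Multiset ℝ) : (0 : ℝ) ∉ cotValues Θ := fun h => by
  obtain ⟨θ, -, hne, hzero⟩ := mem_cotValues.1 h
  exact hne hzero

theorem card_cotValues_le (Θ : Multiset ℝ) :
    Multiset.card (cotValues Θ) ≤ Multiset.card Θ := by
  rw [cotValues, Multiset.card_map]
  exact Multiset.card_le_card (Multiset.filter_le _ Θ)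

variable {A B : Multiset ℝ} {s : ℝ}

theorem notMem_map_two_mul_cotValues (hA : ∀ θ ∈ A, θ ∈ ℚ ∙ π) (hB : ∀ θ ∈ B, θ ∈ ℚ ∙ π) {c : ℝ}
    (hc : c ∈ cotValues A) :
    c ∉ (cotValues B).map (2 * ·) ∧ -c ∉ (cotValues B).map (2 * ·) := by
  obtain ⟨x, hx, -, rfl⟩ := mem_cotValues.1 hc
  have hne : ∀ x' ∈ ℚ ∙ π, cot x' ∉ (cotValues B).map (2 * ·) := by
    intro x' hx' hmem
    obtain ⟨_, hd, hxd⟩ := Multiset.mem_map.1 hmem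
    obtain ⟨y, hy, hy0, rfl⟩ := mem_cotValues.1 hd
    exact cot_ne_two_mul_cot hx' (hB y hy) hy0 hxd.symm
  exact ⟨hne x (hA x hx), cot_neg x ▸ hne (-x) (neg_mem (hA x hx))⟩

theorem card_cotValues_of_notMem_span_pi (hs : s ∉ ℚ ∙ π) (hA : ∀ θ ∈ A, θ - s ∈ ℚ ∙ π) :
    Multiset.card (cotValues A) = Multiset.card A := by
  have hself : notHalfPiMultiples A = A := by
    refine Multiset.filter_eq_self.2 fun θ hθ hk => hs ?_
    have hmem : θ ∈ ℚ ∙ π := mem_span_pi_of_cot_eq_zero (cot_eq_zero_iff.2 hk)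
    exact ((ℚ ∙ π).sub_mem_iff_right hmem).1 (hA θ hθ)
  rw [cotValues, Multiset.card_map, hself]

theorem neg_notMem_cotValues_of_notMem_span_pi (hs : s ∉ ℚ ∙ π) (hA : ∀ θ ∈ A, θ - s ∈ ℚ ∙ π)
    {c : ℝ} (hc : c ∈ cotValues A) : -c ∉ cotValues A := by
  intro hc'
  obtain ⟨x, hx, -, rfl⟩ := mem_cotValues.1 hc
  obtain ⟨y, hy, hy0, hxy⟩ := mem_cotValues.1 hc'
  rw [← cot_neg, cot_eq_cot_iff hy0] at hxy
  obtain ⟨m, hm⟩ := hxy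
  have htwo : (2 : ℚ) • s = -(m * π + (x - s) + (y - s)) := by
    rw [two_smul]
    linarith
  refine hs (((ℚ ∙ π).smul_mem_iff (two_ne_zero' ℚ)).1 ?_)
  rw [htwo]
  exact neg_mem (add_mem (add_mem (intCast_mul_pi_mem_span m) (hA x hx)) (hA y hy))

theorem negInvariant_cotValues_of_add (hA : ∀ θ ∈ A, θ - s ∈ ℚ ∙ π)
    (hB : ∀ θ ∈ B, θ - 2 * s ∈ ℚ ∙ π) (hcard : Multiset.card B < Multiset.card A)
    (h : NegInvariant (cotValues A + (cotValues B).map (2 * ·))) :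
    NegInvariant (cotValues A) ∧ NegInvariant (cotValues B) := by
  have hA' : NegInvariant (cotValues A) := by
    by_cases hs : s ∈ ℚ ∙ π
    · have h2s : 2 * s ∈ ℚ ∙ π := two_mul s ▸ add_mem hs hs
      exact h.of_add_of_notMem fun c hc => notMem_map_two_mul_cotValues
        (fun θ hθ => ((ℚ ∙ π).sub_mem_iff_left hs).1 (hA θ hθ))
        (fun θ hθ => ((ℚ ∙ π).sub_mem_iff_left h2s).1 (hB θ hθ)) hc
    · have hle := h.card_le_of_add fun c => neg_notMem_cotValues_of_notMem_span_pi hs hA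
      rw [card_cotValues_of_notMem_span_pi hs hA, Multiset.card_map] at hle
      exact absurd (hle.trans (card_cotValues_le B)) hcard.not_ge
  refine ⟨hA', ?_⟩
  rw [← negInvariant_map_iff (f := fun c : ℝ => 2 * c) (mul_right_injective₀ two_ne_zero)
    (mul_neg 2)]
  exact hA'.of_add_left h

end CotValues

section Roots

variable {V : Type*} [AddCommGroup V] [Module ℝ V] {Δ : Finset V}

theorem ne_zero_of_forall_proportional
    (hsc : ∀ α ∈ Δ, ∀ α' ∈ Δ, ∀ c : ℝ, α' = c • α → c = 1 ∨ c = 2 ∨ c = 1 / 2)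
    {α : V} (hα : α ∈ Δ) : α ≠ 0 := by
  rintro rfl
  have h := hsc 0 hα 0 hα 0 (smul_zero 0).symm
  norm_num at h

theorem mem_and_mem_span_singleton_iff
    (hsc : ∀ α ∈ Δ, ∀ α' ∈ Δ, ∀ c : ℝ, α' = c • α → c = 1 ∨ c = 2 ∨ c = 1 / 2)
    {α : V} (hα : α ∈ Δ) (γ : V) :
    γ ∈ Δ ∧ γ ∈ ℝ ∙ α ↔ γ = α ∨ γ ∈ Δ ∧ γ = (2 : ℝ) • α ∨ γ ∈ Δ ∧ γ = (1 / 2 : ℝ) • α := by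
  constructor
  · rintro ⟨hγ, hspan⟩
    obtain ⟨c, rfl⟩ := Submodule.mem_span_singleton.1 hspan
    rcases hsc α hα _ hγ c rfl with rfl | rfl | rfl
    · exact Or.inl (one_smul ℝ α)
    · exact Or.inr (Or.inl ⟨hγ, rfl⟩)
    · exact Or.inr (Or.inr ⟨hγ, rfl⟩)
  · have hself := Submodule.mem_span_singleton_self (R := ℝ) α
    rintro (rfl | ⟨hγ, rfl⟩ | ⟨hγ, rfl⟩)
    · exact ⟨hα, hself⟩
    · exact ⟨hγ, Submodule.smul_mem _ _ hself⟩
    · exact ⟨hγ, Submodule.smul_mem _ _ hself⟩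

theorem exists_filter_mem_span_singleton_eq
    (hsc : ∀ α ∈ Δ, ∀ α' ∈ Δ, ∀ c : ℝ, α' = c • α → c = 1 ∨ c = 2 ∨ c = 1 / 2)
    {α : V} (hα : α ∈ Δ) :
    ∃ β ∈ Δ, {γ ∈ Δ | γ ∈ ℝ ∙ α} = ({β} : Finset V) ∨
      (2 : ℝ) • β ∈ Δ ∧ {γ ∈ Δ | γ ∈ ℝ ∙ α} = ({β, (2 : ℝ) • β} : Finset V) := by
  have hnot_both : (1 / 2 : ℝ) • α ∈ Δ → (2 : ℝ) • α ∉ Δ := by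
    intro hhalf htwo
    have h := hsc _ hhalf _ htwo 4 (by rw [smul_smul]; norm_num)
    norm_num at h
  by_cases hhalf : (1 / 2 : ℝ) • α ∈ Δ
  · have hα' : (2 : ℝ) • (1 / 2 : ℝ) • α = α := by rw [smul_smul]; norm_num
    refine ⟨_, hhalf, Or.inr ⟨hα'.symm ▸ hα, ?_⟩⟩
    ext γ
    rw [Finset.mem_filter, mem_and_mem_span_singleton_iff hsc hα, hα',
      Finset.mem_insert, Finset.mem_singleton]
    grind
  · refine ⟨α, hα, ?_⟩
    by_cases htwo : (2 : ℝ) • α ∈ Δ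
    · refine Or.inr ⟨htwo, ?_⟩
      ext γ
      rw [Finset.mem_filter, mem_and_mem_span_singleton_iff hsc hα, Finset.mem_insert,
        Finset.mem_singleton]
      grind
    · refine Or.inl ?_
      ext γ
      rw [Finset.mem_filter, mem_and_mem_span_singleton_iff hsc hα, Finset.mem_singleton]
      grind

theorem negInvariant_map_smul_iff {α : V} (hα : α ≠ 0) {S : Multiset ℝ} :
    NegInvariant (S.map (· • α)) ↔ NegInvariant S :=
  negInvariant_map_iff (smul_left_injective ℝ hα) fun c => neg_smul c α

theorem negInvariant_cotValues_of_sum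
    (hsc : ∀ α ∈ Δ, ∀ α' ∈ Δ, ∀ c : ℝ, α' = c • α → c = 1 ∨ c = 2 ∨ c = 1 / 2)
    (φ : V →ₗ[ℝ] ℝ) (Θhat : V → Multiset ℝ)
    (hshift : ∀ α ∈ Δ, ∀ θ ∈ Θhat α, θ - φ α ∈ ℚ ∙ π)
    (hcard : ∀ α ∈ Δ, (2 : ℝ) • α ∈ Δ →
      Multiset.card (Θhat ((2 : ℝ) • α)) < Multiset.card (Θhat α))
    (h : NegInvariant (∑ α ∈ Δ, (cotValues (Θhat α)).map (· • α))) {α : V} (hα : α ∈ Δ) :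
    NegInvariant (cotValues (Θhat α)) := by
  have hline := h.sum_filter_mem_submodule (fun β _ => zero_notMem_cotValues (Θhat β)) (ℝ ∙ α)
  have hαline : α ∈ ({γ ∈ Δ | γ ∈ ℝ ∙ α} : Finset V) :=
    Finset.mem_filter.2 ⟨hα, Submodule.mem_span_singleton_self α⟩
  obtain ⟨β, hβ, hsingle | ⟨h2β, hpair⟩⟩ := exists_filter_mem_span_singleton_eq hsc hα
  · rw [hsingle, Finset.mem_singleton] at hαline
    rw [hsingle, Finset.sum_singleton] at hline
    exact hαline ▸ (negInvariant_map_smul_iff (ne_zero_of_forall_proportional hsc hβ)).1 hline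
  · have hβ0 := ne_zero_of_forall_proportional hsc hβ
    have hβ2 : β ≠ (2 : ℝ) • β := by
      rw [two_smul]
      simpa using hβ0
    have hsum : (cotValues (Θhat β)).map (· • β) +
          (cotValues (Θhat ((2 : ℝ) • β))).map (· • (2 : ℝ) • β) =
        (cotValues (Θhat β) + (cotValues (Θhat ((2 : ℝ) • β))).map (2 * ·)).map (· • β) := by
      simp only [Multiset.map_add, Multiset.map_map, Function.comp_def, smul_smul, mul_comm]
    rw [hpair, Finset.sum_pair hβ2, hsum, negInvariant_map_smul_iff hβ0] at hline
    have hshift2 : ∀ θ ∈ Θhat ((2 : ℝ) • β), θ - 2 * φ β ∈ ℚ ∙ π := by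
      simpa only [map_smul, smul_eq_mul] using hshift _ h2β
    obtain ⟨hβinv, h2βinv⟩ :=
      negInvariant_cotValues_of_add (hshift β hβ) hshift2 (hcard β hβ h2β) hline
    rw [hpair, Finset.mem_insert, Finset.mem_singleton] at hαline
    rcases hαline with rfl | rfl
    · exact hβinv
    · exact h2βinv

theorem countP_inv_smul_eq_count_cotValues {α : V} (hα : α ≠ 0) (Θ : Multiset ℝ) (x : ℝ) :
    (notHalfPiMultiples Θ).countP (fun θ => ∃ m : ℤ, (θ + m * π)⁻¹ • α = x • α) =
      (cotValues Θ).count (cot x⁻¹) := by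
  rw [cotValues, Multiset.count, Multiset.countP_map, ← Multiset.countP_eq_card_filter]
  refine Multiset.countP_congr rfl fun θ hθ => propext ?_
  rw [eq_comm, cot_eq_cot_iff (mem_notHalfPiMultiples.1 hθ).2]
  exact exists_congr fun m => by rw [(smul_left_injective ℝ hα).eq_iff, inv_eq_iff_eq_inv]

theorem NegInvariant.countP_inv_smul_eq {α : V} (hα : α ≠ 0) {Θ : Multiset ℝ}
    (h : NegInvariant (cotValues Θ)) (v : V) :
    (notHalfPiMultiples Θ).countP (fun θ => ∃ m : ℤ, (θ + m * π)⁻¹ • α = v) =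
      (notHalfPiMultiples Θ).countP (fun θ => ∃ m : ℤ, (θ + m * π)⁻¹ • α = -v) := by
  by_cases hv : v ∈ ℝ ∙ α
  · obtain ⟨x, rfl⟩ := Submodule.mem_span_singleton.1 hv
    rw [← neg_smul, countP_inv_smul_eq_count_cotValues hα, countP_inv_smul_eq_count_cotValues hα,
      inv_neg, cot_neg, h.count_neg]
  · have hzero : ∀ u ∉ ℝ ∙ α,
        (notHalfPiMultiples Θ).countP (fun θ => ∃ m : ℤ, (θ + m * π)⁻¹ • α = u) = 0 := by
      intro u hu
      refine Multiset.countP_eq_zero.2 ?_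
      rintro θ - ⟨m, rfl⟩
      exact hu (Submodule.smul_mem _ _ (Submodule.mem_span_singleton_self α))
    rw [hzero v hv, hzero (-v) (mt neg_mem_iff.1 hv)]

theorem order_three_four_austere_implies_path_austere_general
    {V : Type*} [AddCommGroup V] [Module ℝ V] (Δ : Finset V)
    (hsc : ∀ α ∈ Δ, ∀ α' ∈ Δ, ∀ c : ℝ, α' = c • α → c = 1 ∨ c = 2 ∨ c = 1 / 2)
    (φ : V →ₗ[ℝ] ℝ) (Θhat : V → Multiset ℝ)
    (hshift : ∀ α ∈ Δ, ∀ θ ∈ Θhat α, θ - φ α ∈ ℚ ∙ π)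
    (hcard : ∀ α ∈ Δ, (2 : ℝ) • α ∈ Δ →
      Multiset.card (Θhat ((2 : ℝ) • α)) < Multiset.card (Θhat α))
    (haustere : NegInvariant
      (∑ α ∈ Δ, (notHalfPiMultiples (Θhat α)).map (fun θ => cot θ • α))) (v : V) :
    (∑ α ∈ Δ, (notHalfPiMultiples (Θhat α)).countP (fun θ => ∃ m : ℤ, (θ + m * π)⁻¹ • α = v)) =
      ∑ α ∈ Δ, (notHalfPiMultiples (Θhat α)).countP
        (fun θ => ∃ m : ℤ, (θ + m * π)⁻¹ • α = -v) := by
  have hcot : NegInvariant (∑ α ∈ Δ, (cotValues (Θhat α)).map (· • α)) := by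
    simpa only [cotValues, Multiset.map_map, Function.comp_def] using haustere
  refine Finset.sum_congr rfl fun α hα => ?_
  have hα0 : α ≠ 0 := ne_zero_of_forall_proportional hsc hα
  exact (negInvariant_cotValues_of_sum hsc φ Θhat hshift hcard hcot hα).countP_inv_smul_eq hα0 v

end Roots

/-- Combinatorial core of Theorem 7.6 (Theorem II(iii)). Let `l ∈ {3,4}`, `Δ` a finite
set of nonzero vectors in which proportional members differ by a factor `1`, `2` or
`1/2`, and for each `α ∈ Δ` let `Θ̂_α` be a nonempty finite multiset of reals with
`θ - ⟨α,w⟩ ∈ (π/l)ℤ`, whose cardinality strictly exceeds that of `Θ̂_{2α}` whenever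
`α, 2α ∈ Δ`. Let `Θ_α ⊆ Θ̂_α` consist of the elements not in `(π/2)ℤ`. If the multiset
of vectors `cot θ • α` (`α ∈ Δ`, `θ ∈ Θ_α`) is negation-invariant, then for every
nonzero `v` the count of pairs `(α, θ)` admitting an integer `m` with
`(θ+mπ)⁻¹ • α = v` equals the count of those with `(θ+mπ)⁻¹ • α = -v`. -/
theorem order_three_four_austere_implies_path_austere
    (l : ℕ) (hl : l = 3 ∨ l = 4)
    {V : Type*} [NormedAddCommGroup V] [InnerProductSpace ℝ V] [FiniteDimensional ℝ V]
    (Δ : Finset V) (hne : ∀ α ∈ Δ, α ≠ 0)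
    (hsc : ∀ α ∈ Δ, ∀ α' ∈ Δ, ∀ c : ℝ, α' = c • α →
      c = 1 ∨ c = 2 ∨ c = 1 / 2)
    (w : V) (Θhat : V → Multiset ℝ)
    (hnonempty : ∀ α ∈ Δ, Θhat α ≠ 0)
    (hshift : ∀ α ∈ Δ, ∀ θ ∈ Θhat α, ∃ k : ℤ, θ - (⟪α, w⟫ : ℝ) = k * (π / l))
    (hcard : ∀ α ∈ Δ, (2 : ℝ) • α ∈ Δ →
      Multiset.card (Θhat ((2 : ℝ) • α)) < Multiset.card (Θhat α))
    (haustere :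
      (∑ α ∈ Δ, (notHalfPiMultiples (Θhat α)).map (fun θ => Real.cot θ • α)).map
          (fun v => -v) =
        ∑ α ∈ Δ, (notHalfPiMultiples (Θhat α)).map (fun θ => Real.cot θ • α)) :
    ∀ v : V, v ≠ 0 →
      (∑ α ∈ Δ, (notHalfPiMultiples (Θhat α)).countP
          (fun θ => ∃ m : ℤ, (θ + m * π)⁻¹ • α = v)) =
        ∑ α ∈ Δ, (notHalfPiMultiples (Θhat α)).countP
          (fun θ => ∃ m : ℤ, (θ + m * π)⁻¹ • α = -v) := by
  have hrat : ∀ α ∈ Δ, ∀ θ ∈ Θhat α, θ - (innerₗ V).flip w α ∈ ℚ ∙ π := by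
    intro α hα θ hθ
    obtain ⟨k, hk⟩ := hshift α hα θ hθ
    refine Submodule.mem_span_singleton.2 ⟨k / l, ?_⟩
    rw [LinearMap.flip_apply, innerₗ_apply_apply, hk, Rat.smul_def]
    push_cast
    ring
  exact fun v _ => order_three_four_austere_implies_path_austere_general Δ hsc
    ((innerₗ V).flip w) Θhat hrat hcard haustere v
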